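/- Let G and H be groupoids and F : G ⥤ H a functor, regarded as a morphism in the category Grpd of groupoids. Then F is a monomorphism in Grpd if and only if F is faithful and its object map F.obj is injective. -/

import Mathlib

open CategoryTheory

universe v u

/-- The indiscrete groupoid on two objects. -/
structure WIso : Type u where
  b : Bool

instance : Groupoid.{v, u} WIso.{u} where
  Hom _ _ := PUnit.{v+1}
  id _ := ⟨⟩
  comp _ _ := ⟨⟩
  inv _ := ⟨⟩

/-- The functor out of `WIso` attached to a pair of arrows. -/
def WIso.lift {C : Type u} [Groupoid.{v} C] {z : C} (o : WIso.{u} → C) (a : ∀ i, z ⟶ o i) :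
    WIso.{u} ⥤ C where
  obj := o
  map {i j} _ := Groupoid.inv (a i) ≫ a j

theorem WIso.lift_comp {C D : Type u} [Groupoid.{v} C] [Groupoid.{v} D] (F : C ⥤ D) {z : C}
    (o : WIso.{u} → C) (a a' : ∀ i, z ⟶ o i) (h : ∀ i, F.map (a i) = F.map (a' i)) :
    WIso.lift o a ⋙ F = WIso.lift o a' ⋙ F := by
  refine CategoryTheory.Functor.ext (fun _ => rfl) ?_
  intro i j f
  simp [WIso.lift, h]

theorem WIso.const_comp {C D : Type u} [Groupoid.{v} C] [Groupoid.{v} D] (F : C ⥤ D) {x y : C}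
    (h : F.obj x = F.obj y) :
    ((Functor.const WIso.{u}).obj x) ⋙ F = ((Functor.const WIso.{u}).obj y) ⋙ F := by
  refine CategoryTheory.Functor.ext (fun _ => h) ?_
  intro i j f
  simp

theorem comp_cancel {B C D : Type u} [Groupoid.{v} B] [Groupoid.{v} C] [Groupoid.{v} D]
    (F : C ⥤ D) [F.Faithful] (hF : Function.Injective F.obj) (K L : B ⥤ C)
    (h : K ⋙ F = L ⋙ F) : K = L := by
  have ho : ∀ X, K.obj X = L.obj X := fun X => hF (Functor.congr_obj h X)
  refine CategoryTheory.Functor.ext ho ?_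
  intro X Y f
  apply F.map_injective
  have := Functor.congr_hom h f
  simpa [eqToHom_map] using this

/-- A functor between groupoids is a monomorphism in `Grpd` iff it is faithful and
injective on objects. -/
theorem grpd_mono_iff {G H : Grpd} (F : G ⟶ H) :
    Mono F ↔ F.Faithful ∧ Function.Injective F.obj := by
  constructor
  · intro hm
    have key : ∀ K L : WIso ⥤ G, K ⋙ F = L ⋙ F → K = L := fun K L h =>
      (cancel_mono (Z := Grpd.of WIso) F (g := K) (h := L)).1 h
    refine ⟨⟨?_⟩, ?_⟩
    · intro x y f g hfg
      let o : WIso → G := fun i => match i with | ⟨false⟩ => x | ⟨true⟩ => y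
      let a : (x ⟶ y) → ∀ i, x ⟶ o i := fun f i =>
        match i with | ⟨false⟩ => 𝟙 x | ⟨true⟩ => f
      have h := key (WIso.lift o (a f)) (WIso.lift o (a g)) (WIso.lift_comp F o _ _ (by
        rintro ⟨_ | _⟩
        · rfl
        · exact hfg))
      have h2 := Functor.congr_hom h (X := ⟨false⟩) (Y := ⟨true⟩) ⟨⟩
      have h3 : f = eqToHom rfl ≫ g ≫ eqToHom rfl := by
        simpa only [WIso.lift, a, o, Groupoid.inv_eq_inv, IsIso.inv_id, Category.id_comp] using h2
      simpa using h3
    · intro x y h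
      exact Functor.congr_obj (key _ _ (WIso.const_comp F h)) ⟨true⟩
  · rintro ⟨h1, h2⟩
    exact ⟨fun K L h => comp_cancel F h2 K L h⟩
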